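/- The IRLS iterates satisfy the sufficient-decrease inequality Φ(x^{(t+1)}) ≤ Φ(x^{(t)}) − (p/2) (Σ_{j=1}^n μ_j^{(t)}) ‖x^{(t+1)} − x^{(t)}‖² for every t ≥ 0. -/

import Mathlib

open scoped ContDiff RealInnerProductSpace
open Filter

/-!
Majorization–minimization: for `0 ≤ p ≤ 2` the function `s ↦ s ^ (p / 2)` is concave, so replacing
each term of `Φ` by its tangent at `s = ‖x - a j‖ ^ 2 + ε` bounds `Φ` from above by a quadratic that
agrees with it at `x`. Up to a constant, this quadratic is `p / 2` times the weighted sum of squared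
distances with the IRLS weights at `x`, and its minimizer is the next iterate. The decrease of the
quadratic from `x` to its minimizer is given exactly by the parallel axis identity.
-/

theorem rpow_le_rpow_add_mul_sub {q r s : ℝ} (hq0 : 0 ≤ q) (hq1 : q ≤ 1) (hr : 0 < r) (hs : 0 ≤ s) :
    s ^ q ≤ r ^ q + q * r ^ (q - 1) * (s - r) := by
  have bernoulli : (s / r) ^ q ≤ 1 + q * (s / r - 1) := by
    have hsr : -1 ≤ s / r - 1 := by linarith [div_nonneg hs hr.le]
    simpa only [add_sub_cancel] using rpow_one_add_le_one_add_mul_self hsr hq0 hq1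
  calc s ^ q = (s / r) ^ q * r ^ q := by
        rw [← Real.mul_rpow (div_nonneg hs hr.le) hr.le, div_mul_cancel₀ s hr.ne']
    _ ≤ (1 + q * (s / r - 1)) * r ^ q := by gcongr
    _ = r ^ q + q * r ^ (q - 1) * (s - r) := by
        rw [Real.rpow_sub_one hr.ne']
        field_simp

theorem sum_smul_centerMass_sub_eq_zero {ι K E : Type*} [Field K] [AddCommGroup E] [Module K E]
    {s : Finset ι} {w : ι → K} (hw : ∑ i ∈ s, w i ≠ 0) (z : ι → E) :
    ∑ i ∈ s, w i • (s.centerMass w z - z i) = 0 := by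
  simp only [smul_sub, Finset.sum_sub_distrib, ← Finset.sum_smul, Finset.centerMass,
    smul_inv_smul₀ hw, sub_self]

theorem sum_mul_norm_sub_sq_eq_add_centerMass {ι E : Type*} [SeminormedAddCommGroup E]
    [InnerProductSpace ℝ E] {s : Finset ι} {w : ι → ℝ} (hw : ∑ i ∈ s, w i ≠ 0) (z : ι → E) (x : E) :
    ∑ i ∈ s, w i * ‖x - z i‖ ^ 2 =
      ∑ i ∈ s, w i * ‖s.centerMass w z - z i‖ ^ 2 +
        (∑ i ∈ s, w i) * ‖s.centerMass w z - x‖ ^ 2 := by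
  set c := s.centerMass w z
  have cross_terms : ∑ i ∈ s, w i * ⟪c - x, c - z i⟫ = 0 := by
    simp only [← real_inner_smul_right, ← inner_sum]
    rw [sum_smul_centerMass_sub_eq_zero hw, inner_zero_right]
  have expand (i : ι) : w i * ‖x - z i‖ ^ 2 =
      w i * ‖c - z i‖ ^ 2 + w i * ‖c - x‖ ^ 2 - 2 * (w i * ⟪c - x, c - z i⟫) := by
    rw [← sub_sub_sub_cancel_left (z i) x c, norm_sub_rev, norm_sub_sq_real]
    ring
  simp only [expand, Finset.sum_sub_distrib, Finset.sum_add_distrib, ← Finset.mul_sum,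
    ← Finset.sum_mul, cross_terms, mul_zero, sub_zero]

section IRLS

variable {ι E : Type*} [Fintype ι] [SeminormedAddCommGroup E]

/-- The smoothed `ℓ^p` location objective `Φ` with anchors `a`, weights `w` and smoothing `ε`. -/
noncomputable def irlsObjective (a : ι → E) (w : ι → ℝ) (ε p : ℝ) (x : E) : ℝ :=
  ∑ j, w j * (‖x - a j‖ ^ 2 + ε) ^ (p / 2)

/-- The weight `μ_j` that the IRLS iteration gives to the anchor `a j` at the point `x`. -/
noncomputable def irlsWeight (a : ι → E) (w : ι → ℝ) (ε p : ℝ) (x : E) (j : ι) : ℝ :=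
  w j * (‖x - a j‖ ^ 2 + ε) ^ (p / 2 - 1)

/-- One step of the IRLS iteration: `x` moves to the barycenter of the anchors for the weights
`irlsWeight a w ε p x`. -/
noncomputable def irlsStep [InnerProductSpace ℝ E] (a : ι → E) (w : ι → ℝ) (ε p : ℝ) (x : E) : E :=
  Finset.univ.centerMass (irlsWeight a w ε p x) a

variable {a : ι → E} {w : ι → ℝ} {ε p : ℝ} {x : E}

theorem sum_irlsWeight_pos (hw : 0 < w) (hx : ∀ j, 0 < ‖x - a j‖ ^ 2 + ε) :
    0 < ∑ j, irlsWeight a w ε p x j := by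
  obtain ⟨w_nonneg, k, w_pos⟩ := Pi.lt_def.mp hw
  have rpow_pos (j : ι) := Real.rpow_pos_of_pos (hx j) (p / 2 - 1)
  exact Finset.sum_pos' (fun j _ ↦ mul_nonneg (w_nonneg j) (rpow_pos j).le)
    ⟨k, Finset.mem_univ k, mul_pos w_pos (rpow_pos k)⟩

theorem irlsObjective_le_quadratic_majorant (hw : 0 ≤ w) (hε : 0 ≤ ε) (hp0 : 0 ≤ p) (hp2 : p ≤ 2)
    (hx : ∀ j, 0 < ‖x - a j‖ ^ 2 + ε) (y : E) :
    irlsObjective a w ε p y ≤ irlsObjective a w ε p x +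
      p / 2 * (∑ j, irlsWeight a w ε p x j * ‖y - a j‖ ^ 2 -
        ∑ j, irlsWeight a w ε p x j * ‖x - a j‖ ^ 2) := by
  simp only [irlsObjective, irlsWeight, ← Finset.sum_sub_distrib, Finset.mul_sum,
    ← Finset.sum_add_distrib]
  refine Finset.sum_le_sum fun j _ ↦ ?_
  have tangent := rpow_le_rpow_add_mul_sub (q := p / 2) (s := ‖y - a j‖ ^ 2 + ε)
    (by linarith) (by linarith) (hx j) (by positivity)
  refine (mul_le_mul_of_nonneg_left tangent (hw j)).trans_eq ?_
  ring

theorem stmt_11_general [InnerProductSpace ℝ E] (hw : 0 < w) (hε : 0 ≤ ε) (hp0 : 0 ≤ p)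
    (hp2 : p ≤ 2) (hx : ∀ j, 0 < ‖x - a j‖ ^ 2 + ε) :
    irlsObjective a w ε p (irlsStep a w ε p x) ≤ irlsObjective a w ε p x -
      p / 2 * (∑ j, irlsWeight a w ε p x j) * ‖irlsStep a w ε p x - x‖ ^ 2 := by
  have majorant :=
    irlsObjective_le_quadratic_majorant hw.le hε hp0 hp2 hx (irlsStep a w ε p x)
  have parallel_axis :=
    sum_mul_norm_sub_sq_eq_add_centerMass (sum_irlsWeight_pos (p := p) hw hx).ne' a x
  rw [parallel_axis] at majorant
  refine majorant.trans_eq ?_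
  rw [irlsStep]
  ring

end IRLS

theorem stmt_11
    (d n : ℕ) (hd : 1 ≤ d) (hn : 1 ≤ n)
    (a : Fin n → EuclideanSpace ℝ (Fin d))
    (w : Fin n → ℝ) (hw : ∀ j, 0 < w j)
    (ε : ℝ) (hε : 0 < ε)
    (p : ℝ) (hp0 : 0 < p) (hp2 : p ≤ 2)
    (Φ : EuclideanSpace ℝ (Fin d) → ℝ)
    (hΦ : ∀ x, Φ x = ∑ j, w j * (‖x - a j‖ ^ 2 + ε) ^ (p / 2))
    (x : ℕ → EuclideanSpace ℝ (Fin d))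
    (hx : ∀ t, x (t + 1) =
      (∑ j, w j * (‖x t - a j‖ ^ 2 + ε) ^ (p / 2 - 1))⁻¹ •
        ∑ j, (w j * (‖x t - a j‖ ^ 2 + ε) ^ (p / 2 - 1)) • a j) :
    ∀ t, Φ (x (t + 1)) ≤ Φ (x t) -
      p / 2 * (∑ j, w j * (‖x t - a j‖ ^ 2 + ε) ^ (p / 2 - 1)) * ‖x (t + 1) - x t‖ ^ 2 := by
  intro t
  have w_pos : 0 < w := Pi.lt_def.mpr ⟨fun j ↦ (hw j).le, ⟨0, hn⟩, hw _⟩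
  rw [hΦ, hΦ, hx t]
  exact stmt_11_general w_pos hε.le hp0.le hp2 fun j ↦ by positivity
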